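/- arXiv:0812.0287 — 5 statements merged into one kernel-verified Lean document; each statement's English description precedes it below -/
import Mathlib

section
/- Let L : D → C and R : C → D be functors with an adjunction L ⊣ R, and let (T_D, η^D, μ^D) and (T_C, η^C, μ^C) be monads on D and C respectively. Suppose there is a natural isomorphism φ with components φ_X : T_D(R X) ≅ R(T_C X) (X an object of C) such that (unit compatibility) φ_X ∘ η^D_{R X} = R(η^C_X) for all X, and (multiplication compatibility) φ_X ∘ μ^D_{R X} = R(μ^C_X) ∘ φ_{T_C X} ∘ T_D(φ_X) for all X. Then there exists an adjunction L̄ ⊣ R̄ between the Kleisli categories, with L̄ : Kl(T_D) → Kl(T_C) and R̄ : Kl(T_C) → Kl(T_D), such that R̄ ∘ F_C is naturally isomorphic to F_D ∘ R and L̄ ∘ F_D is naturally isomorphic to F_C ∘ L, where F_D : D → Kl(T_D) and F_C : C → Kl(T_C) denote the free (Kleisli) functors. -/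
/-!
STATEMENT 0: (i) ⇒ (ii) of the lemma characterising when an adjunction commutes with a
pair of monads: a natural isomorphism `φ : T_D ∘ R ≅ R ∘ T_C` compatible with the units
and multiplications induces an adjunction between the Kleisli categories commuting with
the free functors up to natural isomorphism.
-/

open CategoryTheory

/-!
The inverse of `φ` extends `R` to a functor `Rbar` between the Kleisli categories. Because `φ` is
invertible, `Rbar` also lies over `R` along the *forgetful* functors: `Rbar ⋙ U_D ≅ U_C ⋙ R`, which
has the left adjoint `L ⋙ F_C`. As `Kl(T_D)(F_D X, Rbar Y) ≃ D(X, U_D (Rbar Y))` and every object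
of `Kl(T_D)` is free, `Rbar` has a left adjoint `Lbar`. Finally `F_D ⋙ Lbar` and `L ⋙ F_C` are left
adjoint to the same functor, hence isomorphic.
-/

universe v₁ v₂ v₃ u₁ u₂ u₃

section AdjointLifting

variable {A : Type u₁} {B : Type u₂} {E : Type u₃} [Category.{v₁} A] [Category.{v₂} B]
  [Category.{v₃} E] {F : A ⥤ B} {U : B ⥤ A}

lemma leftAdjointObjIsDefined_obj_of_comp (adj : F ⊣ U) (G : E ⥤ B) {X : A}
    (hX : (G ⋙ U).leftAdjointObjIsDefined X) :
    G.leftAdjointObjIsDefined (F.obj X) := by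
  obtain ⟨Y, ⟨e⟩⟩ := hX.has_corepresentation
  exact Functor.CorepresentableBy.isCorepresentable (X := Y)
    { homEquiv := e.homEquiv.trans (adj.homEquiv X _).symm
      homEquiv_comp g f := by
        simpa [e.homEquiv_comp] using adj.homEquiv_naturality_right_symm (e.homEquiv f) (G.map g) }

lemma isRightAdjoint_of_comp_of_essSurj (adj : F ⊣ U) (G : E ⥤ B) [F.EssSurj]
    [(G ⋙ U).IsRightAdjoint] : G.IsRightAdjoint := by
  refine Functor.isRightAdjoint_of_leftAdjointObjIsDefined_eq_top (top_unique fun X _ ↦ ?_)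
  have hfree : G.leftAdjointObjIsDefined (F.obj (F.objPreimage X)) :=
    leftAdjointObjIsDefined_obj_of_comp adj G <|
      Functor.leftAdjointObjIsDefined_of_adjunction (.ofIsRightAdjoint (G ⋙ U)) _
  obtain ⟨Y, ⟨e⟩⟩ := hfree.has_corepresentation
  let i := coyoneda.mapIso (F.objObjPreimageIso X).symm.op
  exact (e.ofIso (Functor.isoWhiskerLeft G i)).isCorepresentable

end AdjointLifting

section Kleisli

variable {C : Type u₁} {D : Type u₂} [Category.{v₁} C] [Category.{v₂} D]

instance essSurj_toKleisli (T : Monad C) : (Kleisli.Adjunction.toKleisli T).EssSurj where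
  mem_essImage X := ⟨X.of, ⟨Iso.refl X⟩⟩

/-- A Kleisli law for a functor `F` from a category with monad `T` to one with monad `S`, also
called a colax morphism of monads or a monad opfunctor. Such laws extend `F` to Kleisli
categories. -/
structure KleisliLaw (T : Monad C) (S : Monad D) (F : C ⥤ D) where
  /-- The underlying natural transformation `F T ⟶ S F`. -/
  trans : T.toFunctor ⋙ F ⟶ F ⋙ S.toFunctor
  map_η_comp_trans (X : C) : F.map (T.η.app X) ≫ trans.app X = S.η.app (F.obj X)
  map_μ_comp_trans (X : C) : F.map (T.μ.app X) ≫ trans.app X =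
    trans.app (T.obj X) ≫ S.map (trans.app X) ≫ S.μ.app (F.obj X)

namespace KleisliLaw

variable {T : Monad C} {S : Monad D} {F : C ⥤ D}

/-- The Kleisli law given by the inverse of an isomorphism `S F ≅ F T` compatible with the monad
structures. -/
def ofIso (φ : F ⋙ S.toFunctor ≅ T.toFunctor ⋙ F)
    (hunit : ∀ X : C, S.η.app (F.obj X) ≫ φ.hom.app X = F.map (T.η.app X))
    (hmul : ∀ X : C, S.μ.app (F.obj X) ≫ φ.hom.app X =
      S.map (φ.hom.app X) ≫ φ.hom.app (T.obj X) ≫ F.map (T.μ.app X)) :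
    KleisliLaw T S F where
  trans := φ.inv
  map_η_comp_trans X := (Iso.comp_inv_eq (φ.app X)).2 (hunit X).symm
  map_μ_comp_trans X := by
    refine (Iso.comp_inv_eq (φ.app X)).2 ?_
    have hS : S.map (φ.inv.app X) ≫ S.map (φ.hom.app X) = 𝟙 _ :=
      (S.mapIso (φ.app X)).inv_hom_id
    have hφ : φ.inv.app (T.obj X) ≫ φ.hom.app (T.obj X) = 𝟙 _ := φ.inv_hom_id_app _
    simp only [Iso.app_hom, Category.assoc, hmul, reassoc_of% hS, reassoc_of% hφ]

instance isIso_ofIso_trans (φ : F ⋙ S.toFunctor ≅ T.toFunctor ⋙ F)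
    (hunit : ∀ X : C, S.η.app (F.obj X) ≫ φ.hom.app X = F.map (T.η.app X))
    (hmul : ∀ X : C, S.μ.app (F.obj X) ≫ φ.hom.app X =
      S.map (φ.hom.app X) ≫ φ.hom.app (T.obj X) ≫ F.map (T.μ.app X)) :
    IsIso (ofIso φ hunit hmul).trans :=
  inferInstanceAs (IsIso φ.inv)

variable (law : KleisliLaw T S F)

lemma trans_comp_extend {X Y : C} (f : X ⟶ T.obj Y) :
    law.trans.app X ≫ S.map (F.map f ≫ law.trans.app Y) ≫ S.μ.app (F.obj Y) =
      F.map (T.map f ≫ T.μ.app Y) ≫ law.trans.app Y := by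
  have hnat : F.map (T.map f) ≫ law.trans.app (T.obj Y) = law.trans.app X ≫ S.map (F.map f) :=
    law.trans.naturality f
  simp only [Functor.map_comp, Category.assoc, law.map_μ_comp_trans, reassoc_of% hnat]

/-- The functor between Kleisli categories induced by a Kleisli law. -/
def kleisliMap : Kleisli T ⥤ Kleisli S where
  obj X := .mk S (F.obj X.of)
  map {_ Y} f := .mk (F.map f.of ≫ law.trans.app Y.of)
  map_id X := Kleisli.hom_ext (law.map_η_comp_trans X.of)
  map_comp f g := by
    ext
    simpa using congrArg (F.map f.of ≫ ·) (law.trans_comp_extend g.of).symm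

lemma kleisliMap_map_toKleisli_map {X Y : C} (f : X ⟶ Y) :
    law.kleisliMap.map ((Kleisli.Adjunction.toKleisli T).map f) =
      (Kleisli.Adjunction.toKleisli S).map (F.map f) := by
  ext
  change F.map (f ≫ T.η.app Y) ≫ law.trans.app Y = F.map f ≫ S.η.app (F.obj Y)
  rw [Functor.map_comp, Category.assoc, law.map_η_comp_trans]

/-- The extension of `F` to Kleisli categories commutes with the free functors. -/
def toKleisliCompIso :
    Kleisli.Adjunction.toKleisli T ⋙ law.kleisliMap ≅ F ⋙ Kleisli.Adjunction.toKleisli S :=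
  NatIso.ofComponents (fun _ ↦ Iso.refl _) fun f ↦
    (Category.comp_id _).trans
      ((law.kleisliMap_map_toKleisli_map f).trans (Category.id_comp _).symm)

/-- The extension of `F` along an invertible Kleisli law commutes with the forgetful functors. -/
noncomputable def fromKleisliCompIso [IsIso law.trans] :
    Kleisli.Adjunction.fromKleisli T ⋙ F ≅ law.kleisliMap ⋙ Kleisli.Adjunction.fromKleisli S :=
  NatIso.ofComponents (fun X ↦ (asIso law.trans).app X.of) fun f ↦ (law.trans_comp_extend f.of).symm

end KleisliLaw

end Kleisli

theorem stmt0 {C : Type*} {D : Type*} [Category C] [Category D]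
    (L : D ⥤ C) (R : C ⥤ D) (adj : L ⊣ R)
    (TD : Monad D) (TC : Monad C)
    (φ : R ⋙ TD.toFunctor ≅ TC.toFunctor ⋙ R)
    (hunit : ∀ X : C, TD.η.app (R.obj X) ≫ φ.hom.app X = R.map (TC.η.app X))
    (hmul : ∀ X : C, TD.μ.app (R.obj X) ≫ φ.hom.app X =
      TD.map (φ.hom.app X) ≫ φ.hom.app (TC.obj X) ≫ R.map (TC.μ.app X)) :
    ∃ (Lbar : Kleisli TD ⥤ Kleisli TC) (Rbar : Kleisli TC ⥤ Kleisli TD),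
      Nonempty (Lbar ⊣ Rbar) ∧
      Nonempty ((Kleisli.Adjunction.toKleisli TC ⋙ Rbar) ≅
        (R ⋙ Kleisli.Adjunction.toKleisli TD)) ∧
      Nonempty ((Kleisli.Adjunction.toKleisli TD ⋙ Lbar) ≅
        (L ⋙ Kleisli.Adjunction.toKleisli TC)) := by
  let law := KleisliLaw.ofIso φ hunit hmul
  let adjForget := (adj.comp (Kleisli.Adjunction.adj TC)).ofNatIsoRight law.fromKleisliCompIso
  have := adjForget.isRightAdjoint
  have := isRightAdjoint_of_comp_of_essSurj (Kleisli.Adjunction.adj TD) law.kleisliMap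
  let adjBar := Adjunction.ofIsRightAdjoint law.kleisliMap
  exact ⟨law.kleisliMap.leftAdjoint, law.kleisliMap, ⟨adjBar⟩, ⟨law.toKleisliCompIso⟩,
    ⟨((Kleisli.Adjunction.adj TD).comp adjBar).leftAdjointUniq adjForget⟩⟩
end

section
/- Let L : D → C and R : C → D be functors with an adjunction L ⊣ R. Let (T_a^C, η^{aC}, μ^{aC}) and (T_b^C, η^{bC}, μ^{bC}) be monads on C commuting via a natural isomorphism ψ^C : T_a^C T_b^C → T_b^C T_a^C, and let (T_a^D, η^{aD}, μ^{aD}) and (T_b^D, η^{bD}, μ^{bD}) be monads on D commuting via ψ^D : T_a^D T_b^D → T_b^D T_a^D (each pair satisfying the four commuting-monad axioms). Suppose given natural isomorphisms φ_a with components T_a^D(R X) ≅ R(T_a^C X) and φ_b with components T_b^D(R X) ≅ R(T_b^C X), each compatible with the units and multiplications of the respective monads (i.e. (φ_a)_X ∘ η^{aD}_{R X} = R(η^{aC}_X) and (φ_a)_X ∘ μ^{aD}_{R X} = R(μ^{aC}_X) ∘ (φ_a)_{T_a^C X} ∘ T_a^D((φ_a)_X), and likewise for φ_b). Define φ_{ab}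 with components T_a^D T_b^D (R X) → R(T_a^C T_b^C X) as (φ_a)_{T_b^C X} ∘ T_a^D((φ_b)_X), and φ_{ba} analogously as (φ_b)_{T_a^C X} ∘ T_b^D((φ_a)_X). Assume the coherence condition R(ψ^C_X) ∘ (φ_{ab})_X = (φ_{ba})_X ∘ ψ^D_{R X} for all objects X of C. Then φ_{ab} is a natural isomorphism from T_a^D T_b^D ∘ R to R ∘ T_a^C T_b^C that is compatible with the units and multiplications of the composite monads T_a^D T_b^D on D and T_a^C T_b^C on C (with composite monad structures as in the composite-monad construction). -/
/-!
STATEMENT 3: If two commuting pairs of monads (on `C` and on `D`) both commute with an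
adjunction `L ⊣ R` via natural isomorphisms `φ_a`, `φ_b` compatible with units and
multiplications, and the coherence condition relating `φ_a`, `φ_b`, `ψ^C`, `ψ^D` holds,
then the composite `φ_ab` is a natural isomorphism `T_a^D T_b^D ∘ R ≅ R ∘ T_a^C T_b^C`
compatible with the units and multiplications of the composite monads.
-/

open CategoryTheory

/-- The unit `X ⟶ T_a (T_b X)` of the composite monad: `(T_a ▷ η^b) ∘ η^a`. -/
def compUnitApp {C : Type*} [Category C] (Ta Tb : Monad C) (X : C) :
    X ⟶ Ta.obj (Tb.obj X) :=
  Ta.η.app X ≫ Ta.map (Tb.η.app X)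

/-- The multiplication `T_a T_b T_a T_b X ⟶ T_a T_b X` of the composite monad:
`(μ^a ◁ T_b) ∘ (T_a T_a ▷ μ^b) ∘ (T_a ▷ ψ ◁ T_b)`, the middle interchange being given by
the (inverse of the) commutation isomorphism `ψ : T_a T_b ≅ T_b T_a`. -/
def compMulApp {C : Type*} [Category C] (Ta Tb : Monad C)
    (ψ : Tb.toFunctor ⋙ Ta.toFunctor ≅ Ta.toFunctor ⋙ Tb.toFunctor) (X : C) :
    Ta.obj (Tb.obj (Ta.obj (Tb.obj X))) ⟶ Ta.obj (Tb.obj X) :=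
  Ta.map (ψ.inv.app (Tb.obj X)) ≫ Ta.map (Ta.map (Tb.μ.app X)) ≫ Ta.μ.app (Tb.obj X)

/-!
The 2-cell `φ_ab` is the pasting of the square `φ_b` on top of the square `φ_a`, so it is natural,
and invertible when both are. It respects the units because each factor does. For the
multiplications, inverting the interchanges in the coherence condition shows that
`T_b T_a ⟶ T_a T_b` slides past the pasted square; this brings the two copies of `φ_b` together,
where they absorb `μ^b`, and likewise the two copies of `φ_a`, which absorb `μ^a`.
-/

section Pasting

variable {C₁ C₂ C₃ C₄ C₅ C₆ : Type*} [Category C₁] [Category C₂] [Category C₃] [Category C₄]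
  [Category C₅] [Category C₆] {T : C₁ ⥤ C₂} {L : C₁ ⥤ C₃} {R : C₂ ⥤ C₄} {B : C₃ ⥤ C₄}
  {L' : C₃ ⥤ C₅} {R' : C₄ ⥤ C₆} {B' : C₅ ⥤ C₆}

theorem twoSquare_naturality (w : TwoSquare T L R B) {X Y : C₁} (f : X ⟶ Y) :
    R.map (T.map f) ≫ w.natTrans.app Y = w.natTrans.app X ≫ B.map (L.map f) :=
  w.natTrans.naturality f

instance isIso_vComp_natTrans (w : TwoSquare T L R B) (w' : TwoSquare B L' R' B')
    [IsIso w.natTrans] [IsIso w'.natTrans] : IsIso (w.vComp w').natTrans := by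
  dsimp only [TwoSquare.vComp]
  infer_instance

end Pasting

section Interchange

variable {C D : Type*} [Category C] [Category D] {R : C ⥤ D} {A : C ⥤ C} {A' : D ⥤ D}
  {α : TwoSquare R A A' R}

theorem inv_app_comp_vComp_app {B : C ⥤ C} {B' : D ⥤ D} {β : TwoSquare R B B' R}
    {ψ : B ⋙ A ≅ A ⋙ B} {ψ' : B' ⋙ A' ≅ A' ⋙ B'} {X : C}
    (hcoh : (β.vComp α).natTrans.app X ≫ R.map (ψ.hom.app X) =
      ψ'.hom.app (R.obj X) ≫ (α.vComp β).natTrans.app X) :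
    ψ'.inv.app (R.obj X) ≫ (β.vComp α).natTrans.app X =
      (α.vComp β).natTrans.app X ≫ R.map (ψ.inv.app X) :=
  (CommSq.vert_inv (g := ψ'.app (R.obj X)) (h := R.mapIso (ψ.app X)) ⟨hcoh⟩).w.symm

theorem interchange_mu_comp_vComp_app {S : Monad C} {S' : Monad D}
    {β : TwoSquare R S.toFunctor S'.toFunctor R} (l : A ⋙ S.toFunctor ⟶ S.toFunctor ⋙ A)
    (l' : A' ⋙ S'.toFunctor ⟶ S'.toFunctor ⋙ A') {X : C}
    (hβ : S'.μ.app (R.obj X) ≫ β.natTrans.app X =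
      S'.map (β.natTrans.app X) ≫ β.natTrans.app (S.obj X) ≫ R.map (S.μ.app X))
    (hcoh : l'.app (R.obj (S.obj X)) ≫ (β.vComp α).natTrans.app (S.obj X) =
      (α.vComp β).natTrans.app (S.obj X) ≫ R.map (l.app (S.obj X))) :
    l'.app (S'.obj (R.obj X)) ≫ A'.map (S'.μ.app (R.obj X)) ≫ (β.vComp α).natTrans.app X =
      S'.map ((β.vComp α).natTrans.app X) ≫ β.natTrans.app (A.obj (S.obj X)) ≫
        R.map (l.app (S.obj X) ≫ A.map (S.μ.app X)) := by
  have l'_naturality : S'.map (A'.map (β.natTrans.app X)) ≫ l'.app (R.obj (S.obj X)) =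
      l'.app (S'.obj (R.obj X)) ≫ A'.map (S'.map (β.natTrans.app X)) :=
    l'.naturality (β.natTrans.app X)
  calc l'.app (S'.obj (R.obj X)) ≫ A'.map (S'.μ.app (R.obj X)) ≫ (β.vComp α).natTrans.app X
      = l'.app (S'.obj (R.obj X)) ≫ A'.map (S'.μ.app (R.obj X) ≫ β.natTrans.app X) ≫
          α.natTrans.app (S.obj X) := by
        simp
    _ = (l'.app (S'.obj (R.obj X)) ≫ A'.map (S'.map (β.natTrans.app X))) ≫
          A'.map (β.natTrans.app (S.obj X)) ≫
            A'.map (R.map (S.μ.app X)) ≫ α.natTrans.app (S.obj X) := by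
        rw [hβ]; simp
    _ = S'.map (A'.map (β.natTrans.app X)) ≫
          (l'.app (R.obj (S.obj X)) ≫ (β.vComp α).natTrans.app (S.obj X)) ≫
            R.map (A.map (S.μ.app X)) := by
        rw [twoSquare_naturality α, ← l'_naturality]; simp
    _ = S'.map ((β.vComp α).natTrans.app X) ≫ β.natTrans.app (A.obj (S.obj X)) ≫
          R.map (l.app (S.obj X) ≫ A.map (S.μ.app X)) := by
        rw [hcoh]; simp

end Interchange

section Monads

variable {C D : Type*} [Category C] [Category D] {R : C ⥤ D} {TaC TbC : Monad C}
  {TaD TbD : Monad D} {φa : TwoSquare R TaC.toFunctor TaD.toFunctor R}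
  {φb : TwoSquare R TbC.toFunctor TbD.toFunctor R}

theorem compUnitApp_comp_vComp_app {X : C}
    (hφaη : TaD.η.app (R.obj X) ≫ φa.natTrans.app X = R.map (TaC.η.app X))
    (hφbη : TbD.η.app (R.obj X) ≫ φb.natTrans.app X = R.map (TbC.η.app X)) :
    compUnitApp TaD TbD (R.obj X) ≫ (φb.vComp φa).natTrans.app X =
      R.map (compUnitApp TaC TbC X) := by
  calc compUnitApp TaD TbD (R.obj X) ≫ (φb.vComp φa).natTrans.app X
      = TaD.η.app (R.obj X) ≫ TaD.map (TbD.η.app (R.obj X) ≫ φb.natTrans.app X) ≫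
          φa.natTrans.app (TbC.obj X) := by
        simp [compUnitApp]
    _ = (TaD.η.app (R.obj X) ≫ φa.natTrans.app X) ≫ R.map (TaC.map (TbC.η.app X)) := by
        rw [hφbη, twoSquare_naturality φa]; simp
    _ = R.map (compUnitApp TaC TbC X) := by
        rw [hφaη, compUnitApp, R.map_comp]

theorem compMulApp_comp_vComp_app
    {ψC : TbC.toFunctor ⋙ TaC.toFunctor ≅ TaC.toFunctor ⋙ TbC.toFunctor}
    {ψD : TbD.toFunctor ⋙ TaD.toFunctor ≅ TaD.toFunctor ⋙ TbD.toFunctor} {X : C}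
    (hφaμ : TaD.μ.app (R.obj (TbC.obj X)) ≫ φa.natTrans.app (TbC.obj X) =
      TaD.map (φa.natTrans.app (TbC.obj X)) ≫ φa.natTrans.app (TaC.obj (TbC.obj X)) ≫
        R.map (TaC.μ.app (TbC.obj X)))
    (hφbμ : TbD.μ.app (R.obj X) ≫ φb.natTrans.app X =
      TbD.map (φb.natTrans.app X) ≫ φb.natTrans.app (TbC.obj X) ≫ R.map (TbC.μ.app X))
    (hcoh : (φb.vComp φa).natTrans.app (TbC.obj X) ≫ R.map (ψC.hom.app (TbC.obj X)) =
      ψD.hom.app (R.obj (TbC.obj X)) ≫ (φa.vComp φb).natTrans.app (TbC.obj X)) :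
    compMulApp TaD TbD ψD (R.obj X) ≫ (φb.vComp φa).natTrans.app X =
      TaD.map (TbD.map ((φb.vComp φa).natTrans.app X)) ≫
        (φb.vComp φa).natTrans.app (TaC.obj (TbC.obj X)) ≫ R.map (compMulApp TaC TbC ψC X) := by
  calc compMulApp TaD TbD ψD (R.obj X) ≫ (φb.vComp φa).natTrans.app X
      = TaD.map (ψD.inv.app (TbD.obj (R.obj X)) ≫ TaD.map (TbD.μ.app (R.obj X))) ≫
          (TaD.μ.app (TbD.obj (R.obj X)) ≫ TaD.map (φb.natTrans.app X)) ≫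
            φa.natTrans.app (TbC.obj X) := by
        simp [compMulApp]
    _ = TaD.map (ψD.inv.app (TbD.obj (R.obj X)) ≫ TaD.map (TbD.μ.app (R.obj X)) ≫
          (φb.vComp φa).natTrans.app X) ≫
            φa.natTrans.app (TaC.obj (TbC.obj X)) ≫ R.map (TaC.μ.app (TbC.obj X)) := by
        rw [← TaD.mu_naturality]; simp [hφaμ]
    _ = TaD.map (TbD.map ((φb.vComp φa).natTrans.app X)) ≫
          TaD.map (φb.natTrans.app (TaC.obj (TbC.obj X))) ≫
            (TaD.map (R.map (ψC.inv.app (TbC.obj X) ≫ TaC.map (TbC.μ.app X))) ≫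
              φa.natTrans.app (TaC.obj (TbC.obj X))) ≫ R.map (TaC.μ.app (TbC.obj X)) := by
        rw [interchange_mu_comp_vComp_app ψC.inv ψD.inv hφbμ (inv_app_comp_vComp_app hcoh)]
        simp
    _ = TaD.map (TbD.map ((φb.vComp φa).natTrans.app X)) ≫
          (φb.vComp φa).natTrans.app (TaC.obj (TbC.obj X)) ≫
            R.map (compMulApp TaC TbC ψC X) := by
        rw [twoSquare_naturality φa]; simp [compMulApp]

end Monads

theorem stmt3_general {C D : Type*} [Category C] [Category D] (R : C ⥤ D)
    (TaC TbC : Monad C) (TaD TbD : Monad D)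
    (ψC : TbC.toFunctor ⋙ TaC.toFunctor ≅ TaC.toFunctor ⋙ TbC.toFunctor)
    (ψD : TbD.toFunctor ⋙ TaD.toFunctor ≅ TaD.toFunctor ⋙ TbD.toFunctor)
    (φa : TwoSquare R TaC.toFunctor TaD.toFunctor R)
    (φb : TwoSquare R TbC.toFunctor TbD.toFunctor R)
    (hφaη : ∀ X : C, TaD.η.app (R.obj X) ≫ φa.natTrans.app X = R.map (TaC.η.app X))
    (hφaμ : ∀ X : C, TaD.μ.app (R.obj X) ≫ φa.natTrans.app X =
      TaD.map (φa.natTrans.app X) ≫ φa.natTrans.app (TaC.obj X) ≫ R.map (TaC.μ.app X))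
    (hφbη : ∀ X : C, TbD.η.app (R.obj X) ≫ φb.natTrans.app X = R.map (TbC.η.app X))
    (hφbμ : ∀ X : C, TbD.μ.app (R.obj X) ≫ φb.natTrans.app X =
      TbD.map (φb.natTrans.app X) ≫ φb.natTrans.app (TbC.obj X) ≫ R.map (TbC.μ.app X))
    (hcoh : ∀ X : C, (φb.vComp φa).natTrans.app X ≫ R.map (ψC.hom.app X) =
      ψD.hom.app (R.obj X) ≫ (φa.vComp φb).natTrans.app X) :
    (∀ X : C, compUnitApp TaD TbD (R.obj X) ≫ (φb.vComp φa).natTrans.app X =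
      R.map (compUnitApp TaC TbC X)) ∧
    (∀ X : C, compMulApp TaD TbD ψD (R.obj X) ≫ (φb.vComp φa).natTrans.app X =
      TaD.map (TbD.map ((φb.vComp φa).natTrans.app X)) ≫
        (φb.vComp φa).natTrans.app (TaC.obj (TbC.obj X)) ≫ R.map (compMulApp TaC TbC ψC X)) :=
  ⟨fun X ↦ compUnitApp_comp_vComp_app (hφaη X) (hφbη X),
    fun X ↦ compMulApp_comp_vComp_app (hφaμ (TbC.obj X)) (hφbμ X) (hcoh (TbC.obj X))⟩

theorem stmt3 {C : Type*} {D : Type*} [Category C] [Category D]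
    (L : D ⥤ C) (R : C ⥤ D) (adj : L ⊣ R)
    (TaC TbC : Monad C) (TaD TbD : Monad D)
    (ψC : TbC.toFunctor ⋙ TaC.toFunctor ≅ TaC.toFunctor ⋙ TbC.toFunctor)
    (ψD : TbD.toFunctor ⋙ TaD.toFunctor ≅ TaD.toFunctor ⋙ TbD.toFunctor)
    -- the pair of monads on C commutes via ψC
    (hC1 : ∀ X : C, TaC.map (TbC.η.app X) ≫ ψC.hom.app X = TbC.η.app (TaC.obj X))
    (hC2 : ∀ X : C, TaC.η.app (TbC.obj X) ≫ ψC.hom.app X = TbC.map (TaC.η.app X))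
    (hC3 : ∀ X : C, TaC.μ.app (TbC.obj X) ≫ ψC.hom.app X =
      TaC.map (ψC.hom.app X) ≫ ψC.hom.app (TaC.obj X) ≫ TbC.map (TaC.μ.app X))
    (hC4 : ∀ X : C, TaC.map (TbC.μ.app X) ≫ ψC.hom.app X =
      ψC.hom.app (TbC.obj X) ≫ TbC.map (ψC.hom.app X) ≫ TbC.μ.app (TaC.obj X))
    -- the pair of monads on D commutes via ψD
    (hD1 : ∀ X : D, TaD.map (TbD.η.app X) ≫ ψD.hom.app X = TbD.η.app (TaD.obj X))
    (hD2 : ∀ X : D, TaD.η.app (TbD.obj X) ≫ ψD.hom.app X = TbD.map (TaD.η.app X))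
    (hD3 : ∀ X : D, TaD.μ.app (TbD.obj X) ≫ ψD.hom.app X =
      TaD.map (ψD.hom.app X) ≫ ψD.hom.app (TaD.obj X) ≫ TbD.map (TaD.μ.app X))
    (hD4 : ∀ X : D, TaD.map (TbD.μ.app X) ≫ ψD.hom.app X =
      ψD.hom.app (TbD.obj X) ≫ TbD.map (ψD.hom.app X) ≫ TbD.μ.app (TaD.obj X))
    -- both monad pairs commute with the adjunction, via φa and φb
    (φa : R ⋙ TaD.toFunctor ≅ TaC.toFunctor ⋙ R)
    (φb : R ⋙ TbD.toFunctor ≅ TbC.toFunctor ⋙ R)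
    (hφaη : ∀ X : C, TaD.η.app (R.obj X) ≫ φa.hom.app X = R.map (TaC.η.app X))
    (hφaμ : ∀ X : C, TaD.μ.app (R.obj X) ≫ φa.hom.app X =
      TaD.map (φa.hom.app X) ≫ φa.hom.app (TaC.obj X) ≫ R.map (TaC.μ.app X))
    (hφbη : ∀ X : C, TbD.η.app (R.obj X) ≫ φb.hom.app X = R.map (TbC.η.app X))
    (hφbμ : ∀ X : C, TbD.μ.app (R.obj X) ≫ φb.hom.app X =
      TbD.map (φb.hom.app X) ≫ φb.hom.app (TbC.obj X) ≫ R.map (TbC.μ.app X))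
    -- coherence: R(ψ^C_X) ∘ (φ_ab)_X = (φ_ba)_X ∘ ψ^D_{R X}
    (hcoh : ∀ X : C,
      (TaD.map (φb.hom.app X) ≫ φa.hom.app (TbC.obj X)) ≫ R.map (ψC.hom.app X) =
        ψD.hom.app (R.obj X) ≫ TbD.map (φa.hom.app X) ≫ φb.hom.app (TaC.obj X)) :
    -- conclusion: φ_ab is a natural isomorphism compatible with the composite monad
    -- structures
    ∃ Φ : R ⋙ TbD.toFunctor ⋙ TaD.toFunctor ≅ (TbC.toFunctor ⋙ TaC.toFunctor) ⋙ R,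
      (∀ X : C, Φ.hom.app X = TaD.map (φb.hom.app X) ≫ φa.hom.app (TbC.obj X)) ∧
      (∀ X : C, compUnitApp TaD TbD (R.obj X) ≫ Φ.hom.app X =
        R.map (compUnitApp TaC TbC X)) ∧
      (∀ X : C, compMulApp TaD TbD ψD (R.obj X) ≫ Φ.hom.app X =
        TaD.map (TbD.map (Φ.hom.app X)) ≫ Φ.hom.app (TaC.obj (TbC.obj X)) ≫
          R.map (compMulApp TaC TbC ψC X)) := by
  refine ⟨asIso (TwoSquare.vComp (.mk R _ _ R φb.hom) (.mk R _ _ R φa.hom)).natTrans,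
    fun X ↦ by simp, ?_⟩
  exact stmt3_general R TaC TbC TaD TbD ψC ψD (.mk _ _ _ _ φa.hom) (.mk _ _ _ _ φb.hom)
    hφaη hφaμ hφbη hφbμ fun X ↦ by simpa using hcoh X
end

section
/- Let A and B be frames, let g : B → A be a frame homomorphism, and let p : A → B be a monotone map. Then the following are equivalent: (1) p(a₁ ⊓ (a₂ ⊔ g b)) = (p a₁ ⊓ b) ⊔ p(a₁ ⊓ a₂) for all a₁, a₂ ∈ A and all b ∈ B; (2) both p a ⊓ b ≤ p(a ⊓ g b) for all a ∈ A, b ∈ B, and p(a ⊔ g b) ≤ p a ⊔ b for all a ∈ A, b ∈ B. -/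
/-!
STATEMENT 5: For frames `A`, `B`, a frame homomorphism `g : B → A` and a monotone map
`p : A → B`, the defining equation of a weak triquotient assignment is equivalent to
the conjunction of the two inequalities.
-/

/-!
Each half of the defining equation is equivalent to one of the two inequalities. An inequality is
recovered from its half by substituting `a₂ = g b` or `a₁ = a₂ ⊔ g b`. Conversely, the upper bound
comes from `p (a₁ ⊓ (a₂ ⊔ g b)) ≤ p (a₁ ⊓ a₂) ⊔ b` by meeting with `p a₁` and applying the modular
law along `p (a₁ ⊓ a₂) ≤ p a₁`.
-/

section Lattice

variable {A B : Type*} [Lattice B] {g : B → A} {p : A → B}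

theorem forall_inf_sup_map_inf_le_iff [Lattice A] (hp : Monotone p) :
    (∀ a₁ a₂ b, p a₁ ⊓ b ⊔ p (a₁ ⊓ a₂) ≤ p (a₁ ⊓ (a₂ ⊔ g b))) ↔
      ∀ a b, p a ⊓ b ≤ p (a ⊓ g b) := by
  constructor
  · intro h a b
    calc p a ⊓ b ≤ p a ⊓ b ⊔ p (a ⊓ g b) := le_sup_left
      _ ≤ p (a ⊓ (g b ⊔ g b)) := h a (g b) b
      _ = p (a ⊓ g b) := by rw [sup_idem]
  · intro h a₁ a₂ b
    have h_left : p a₁ ⊓ b ≤ p (a₁ ⊓ (a₂ ⊔ g b)) :=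
      (h a₁ b).trans (hp (inf_le_inf_left a₁ le_sup_right))
    have h_right : p (a₁ ⊓ a₂) ≤ p (a₁ ⊓ (a₂ ⊔ g b)) := hp (inf_le_inf_left a₁ le_sup_left)
    exact sup_le h_left h_right

theorem forall_map_inf_sup_le_iff [DistribLattice A] [IsModularLattice B] (hp : Monotone p) :
    (∀ a₁ a₂ b, p (a₁ ⊓ (a₂ ⊔ g b)) ≤ p a₁ ⊓ b ⊔ p (a₁ ⊓ a₂)) ↔
      ∀ a b, p (a ⊔ g b) ≤ p a ⊔ b := by
  constructor
  · intro h a b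
    calc p (a ⊔ g b) = p ((a ⊔ g b) ⊓ (a ⊔ g b)) := by rw [inf_idem]
      _ ≤ p (a ⊔ g b) ⊓ b ⊔ p ((a ⊔ g b) ⊓ a) := h (a ⊔ g b) a b
      _ ≤ b ⊔ p a := sup_le_sup inf_le_right (hp inf_le_right)
      _ = p a ⊔ b := sup_comm b (p a)
  · intro h a₁ a₂ b
    have h_sup : p (a₁ ⊓ (a₂ ⊔ g b)) ≤ p (a₁ ⊓ a₂) ⊔ b :=
      calc p (a₁ ⊓ (a₂ ⊔ g b)) = p (a₁ ⊓ a₂ ⊔ a₁ ⊓ g b) := by rw [inf_sup_left]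
        _ ≤ p (a₁ ⊓ a₂ ⊔ g b) := hp (sup_le_sup_left inf_le_right _)
        _ ≤ p (a₁ ⊓ a₂) ⊔ b := h (a₁ ⊓ a₂) b
    calc p (a₁ ⊓ (a₂ ⊔ g b)) ≤ (p (a₁ ⊓ a₂) ⊔ b) ⊓ p a₁ := le_inf h_sup (hp inf_le_left)
      _ = p (a₁ ⊓ a₂) ⊔ b ⊓ p a₁ := sup_inf_assoc_of_le b (hp inf_le_left)
      _ = p a₁ ⊓ b ⊔ p (a₁ ⊓ a₂) := by rw [sup_comm, inf_comm]

theorem stmt5_general [DistribLattice A] [IsModularLattice B] (hp : Monotone p) :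
    (∀ a₁ a₂ b, p (a₁ ⊓ (a₂ ⊔ g b)) = p a₁ ⊓ b ⊔ p (a₁ ⊓ a₂)) ↔
      (∀ a b, p a ⊓ b ≤ p (a ⊓ g b)) ∧ ∀ a b, p (a ⊔ g b) ≤ p a ⊔ b := by
  rw [← forall_inf_sup_map_inf_le_iff hp, ← forall_map_inf_sup_le_iff hp, and_comm]
  simp only [le_antisymm_iff, forall_and]

end Lattice

theorem stmt5 {A B : Type*} [Order.Frame A] [Order.Frame B]
    (g : FrameHom B A) (p : A →o B) :
    (∀ (a₁ a₂ : A) (b : B), p (a₁ ⊓ (a₂ ⊔ g b)) = (p a₁ ⊓ b) ⊔ p (a₁ ⊓ a₂)) ↔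
      ((∀ (a : A) (b : B), p a ⊓ b ≤ p (a ⊓ g b)) ∧
        (∀ (a : A) (b : B), p (a ⊔ g b) ≤ p a ⊔ b)) :=
  stmt5_general p.monotone
end

section
/- Let A and B be frames, let g : B → A be a frame homomorphism, and let e : A → B be a map forming a Galois connection with g (that is, e a ≤ b if and only if a ≤ g b, for all a ∈ A, b ∈ B). Then e satisfies the Frobenius identity e(a ⊓ g b) = e a ⊓ b for all a ∈ A and b ∈ B if and only if e is a weak triquotient assignment with respect to g, i.e. e(a₁ ⊓ (a₂ ⊔ g b)) = (e a₁ ⊓ b) ⊔ e(a₁ ⊓ a₂) for all a₁, a₂ ∈ A and b ∈ B. -/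
/-!
STATEMENT 6: For frames `A`, `B`, a frame homomorphism `g : B → A` and a map `e : A → B`
forming a Galois connection with `g`, the Frobenius identity holds for `e` if and only if
`e` is a weak triquotient assignment with respect to `g`.
-/

/-- Weak triquotient assignments `p : A → B` along `g : B → A`, which generalize the left adjoint
`∃_f` of the inverse image `g = Ωf` of an open locale map `f`. Here `A` and `B` are arbitrary
lattices and `g` is an arbitrary function, so that the notion can be compared with the Frobenius
identity beyond frames. -/
structure IsWeakTriquotientAssignment {A B : Type*} [Lattice A] [Lattice B]
    (g : B → A) (p : A → B) : Prop where
  monotone : Monotone p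
  map_inf_sup (a₁ a₂ : A) (b : B) : p (a₁ ⊓ (a₂ ⊔ g b)) = (p a₁ ⊓ b) ⊔ p (a₁ ⊓ a₂)

namespace IsWeakTriquotientAssignment

section Lattice

variable {A B : Type*} [Lattice A] [Lattice B] {g : B → A} {p : A → B}

theorem inf_le_map_inf (hp : IsWeakTriquotientAssignment g p) (a : A) (b : B) :
    p a ⊓ b ≤ p (a ⊓ g b) :=
  calc
    p a ⊓ b ≤ (p a ⊓ b) ⊔ p (a ⊓ g b) := le_sup_left
    _ = p (a ⊓ (g b ⊔ g b)) := (hp.map_inf_sup a (g b) b).symm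
    _ = p (a ⊓ g b) := by rw [sup_idem]

theorem map_inf_of_map_map_le (hp : IsWeakTriquotientAssignment g p) (hpg : ∀ b, p (g b) ≤ b)
    (a : A) (b : B) : p (a ⊓ g b) = p a ⊓ b :=
  le_antisymm
    ((hp.monotone.map_inf_le a (g b)).trans (inf_le_inf_left (p a) (hpg b)))
    (hp.inf_le_map_inf a b)

end Lattice

theorem of_map_sup_of_map_inf {A B : Type*} [DistribLattice A] [Lattice B]
    {g : B → A} {p : A → B} (map_sup : ∀ a₁ a₂, p (a₁ ⊔ a₂) = p a₁ ⊔ p a₂)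
    (frobenius : ∀ a b, p (a ⊓ g b) = p a ⊓ b) : IsWeakTriquotientAssignment g p where
  monotone a₁ a₂ h := by rw [← sup_eq_right, ← map_sup, sup_eq_right.mpr h]
  map_inf_sup a₁ a₂ b :=
    calc
      p (a₁ ⊓ (a₂ ⊔ g b)) = p ((a₁ ⊓ g b) ⊔ (a₁ ⊓ a₂)) := by rw [inf_sup_left, sup_comm]
      _ = p (a₁ ⊓ g b) ⊔ p (a₁ ⊓ a₂) := map_sup _ _
      _ = (p a₁ ⊓ b) ⊔ p (a₁ ⊓ a₂) := by rw [frobenius]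

end IsWeakTriquotientAssignment

theorem stmt6_general {A B : Type*} [DistribLattice A] [Lattice B] {g : B → A} {e : A → B}
    (gc : GaloisConnection e g) :
    (∀ (a : A) (b : B), e (a ⊓ g b) = e a ⊓ b) ↔ IsWeakTriquotientAssignment g e :=
  ⟨.of_map_sup_of_map_inf fun _ _ => gc.l_sup, fun he => he.map_inf_of_map_map_le gc.l_u_le⟩

theorem stmt6 {A B : Type*} [Order.Frame A] [Order.Frame B]
    (g : FrameHom B A) (e : A → B)
    (gc : ∀ (a : A) (b : B), e a ≤ b ↔ a ≤ g b) :
    (∀ (a : A) (b : B), e (a ⊓ g b) = e a ⊓ b) ↔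
      (∀ (a₁ a₂ : A) (b : B), e (a₁ ⊓ (a₂ ⊔ g b)) = (e a₁ ⊓ b) ⊔ e (a₁ ⊓ a₂)) :=
  have hgc : GaloisConnection e g := gc
  (stmt6_general hgc).trans ⟨fun he => he.map_inf_sup, fun h => ⟨hgc.monotone_l, h⟩⟩
end

section
/- Let B be a type. Define maps q, q' : Set B → Set (B × B) × Prop, where Set (B × B) × Prop is ordered componentwise (subsets by inclusion, Prop by implication), by q(I) = (I ×ˢ I, True) and q'(I) = ({(i, i) | i ∈ I}, I.Nonempty). Then: (1) q and q' both preserve suprema of nonempty directed families of subsets of B (i.e. they are dcpo homomorphisms); and (2) for every I : Set B, q(I) = q'(I) if and only if I = {b} for some b ∈ B; consequently the map b ↦ {b} is a bijection from B onto the equalizer {I : Set B | q(I) = q'(I)}. -/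
/-!
STATEMENT 7: For a type `B`, the maps `q, q' : Set B → Set (B × B) × Prop` defined by
`q I = (I ×ˢ I, True)` and `q' I = ({(i, i) | i ∈ I}, I.Nonempty)` are dcpo homomorphisms
(preserve suprema of nonempty directed families), and `B` is (via `b ↦ {b}`) the equalizer
of `q` and `q'`.
-/

/-- The first dcpo homomorphism `P B → P (B × B) × Ω` of the paper's equalizer lemma. -/
def eqlzrQ (B : Type*) : Set B → Set (B × B) × Prop :=
  fun I => (I ×ˢ I, True)

/-- The second dcpo homomorphism `P B → P (B × B) × Ω` of the paper's equalizer lemma. -/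
def eqlzrQ' (B : Type*) : Set B → Set (B × B) × Prop :=
  fun I => ({p : B × B | p.1 = p.2 ∧ p.1 ∈ I}, I.Nonempty)

section SetLemmas

variable {α β : Type*} {ι : Sort*}

theorem iUnion_prod_of_directed {s : ι → Set α} {t : ι → Set β}
    (hst : Directed (· ≤ ·) fun i => (s i, t i)) :
    ⋃ i, s i ×ˢ t i = (⋃ i, s i) ×ˢ ⋃ i, t i := by
  ext ⟨a, b⟩
  simp only [Set.mem_iUnion, Set.mem_prod]
  constructor
  · rintro ⟨i, ha, hb⟩
    exact ⟨⟨i, ha⟩, ⟨i, hb⟩⟩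
  · rintro ⟨⟨i, ha⟩, ⟨j, hb⟩⟩
    obtain ⟨k, hik, hjk⟩ := hst i j
    exact ⟨k, hik.1 ha, hjk.2 hb⟩

theorem prod_self_eq_image_diag_iff {s : Set α} :
    s ×ˢ s = Function.diag '' s ↔ s.Subsingleton := by
  rw [Set.diag_image, eq_comm, Set.inter_eq_right, ← Set.sdiff_eq_empty,
    Set.prod_sdiff_diagonal, Set.offDiag_eq_empty]

end SetLemmas

section Equalizer

variable {B : Type*} {ι : Sort*}

theorem eqlzrQ'_eq_image_diag (I : Set B) :
    eqlzrQ' B I = (Function.diag '' I, I.Nonempty) := by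
  refine Prod.ext ?_ rfl
  apply Set.Subset.antisymm
  · rintro ⟨i, j⟩ ⟨hij, hi⟩
    exact ⟨i, hi, Prod.ext rfl hij⟩
  · rintro _ ⟨i, hi, rfl⟩
    exact ⟨rfl, hi⟩

theorem eqlzrQ_iSup_of_directed [Nonempty ι] {F : ι → Set B} (hF : Directed (· ≤ ·) F) :
    eqlzrQ B (⨆ i, F i) = ⨆ i, eqlzrQ B (F i) := by
  have hFF : Directed (· ≤ ·) fun i => (F i, F i) :=
    hF.mono_comp (g := fun I => (I, I)) _ fun _ _ h => ⟨h, h⟩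
  simp only [eqlzrQ, Prod.iSup_mk, Set.iSup_eq_iUnion, iUnion_prod_of_directed hFF, iSup_const]

theorem eqlzrQ'_iSup (F : ι → Set B) : eqlzrQ' B (⨆ i, F i) = ⨆ i, eqlzrQ' B (F i) := by
  simp only [eqlzrQ'_eq_image_diag, Prod.iSup_mk, Set.iSup_eq_iUnion, Set.image_iUnion,
    Set.nonempty_iUnion, iSup_Prop_eq]

theorem eqlzrQ_eq_eqlzrQ'_iff {I : Set B} : eqlzrQ B I = eqlzrQ' B I ↔ ∃ b : B, I = {b} := by
  rw [eqlzrQ'_eq_image_diag, eqlzrQ, Prod.mk_inj, prod_self_eq_image_diag_iff, eq_iff_iff,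
    true_iff, and_comm, Set.exists_eq_singleton_iff_nonempty_subsingleton]

theorem setOf_eqlzrQ_eq_eqlzrQ' :
    {I : Set B | eqlzrQ B I = eqlzrQ' B I} = Set.range ({·} : B → Set B) := by
  simp only [eqlzrQ_eq_eqlzrQ'_iff, Set.range, eq_comm]

end Equalizer

theorem stmt7 (B : Type*) :
    -- (1) `q` and `q'` preserve suprema of nonempty directed families
    (∀ (ι : Type*) [Nonempty ι] (F : ι → Set B), Directed (· ≤ ·) F →
      eqlzrQ B (⨆ i, F i) = ⨆ i, eqlzrQ B (F i)) ∧
    (∀ (ι : Type*) [Nonempty ι] (F : ι → Set B), Directed (· ≤ ·) F →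
      eqlzrQ' B (⨆ i, F i) = ⨆ i, eqlzrQ' B (F i)) ∧
    -- (2) the equalizer of `q` and `q'` consists exactly of the singletons
    (∀ I : Set B, eqlzrQ B I = eqlzrQ' B I ↔ ∃ b : B, I = {b}) ∧
    -- consequently `b ↦ {b}` is a bijection from `B` onto the equalizer
    Set.BijOn (fun b : B => ({b} : Set B)) Set.univ {I : Set B | eqlzrQ B I = eqlzrQ' B I} := by
  refine ⟨fun _ _ _ hF => eqlzrQ_iSup_of_directed hF, fun _ _ F _ => eqlzrQ'_iSup F,
    fun _ => eqlzrQ_eq_eqlzrQ'_iff, ?_⟩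
  rw [setOf_eqlzrQ_eq_eqlzrQ', ← Set.image_univ]
  exact Set.singleton_injective.injOn.bijOn_image
end
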